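/- (Main theorem, symmetric form) For natural numbers m, n and complex a, b, c with Re(a) < 2, b and c not nonpositive integers, c − b not an integer, and 1−a, 1+b−a, 1+c−a, 1−a+b, 1−a+c not nonpositive integers: ₃F₂(a, b, c; b+1+m, c+1+n; 1) / ((b)_{m+1} (c)_{n+1}) = B(1−a, b)/((c−b)_{n+1} · m!) · ₃F₂(−m, b, b−c−n; 1+b−a, 1+b−c; 1) + B(1−a, c)/((b−c)_{m+1} · n!) · ₃F₂(−n, c, c−b−m; 1+c−a, 1+c−b; 1), where the two ₃F₂ series on the right are terminating finite sums and the one on the left converges since Re(2−a+m+n) > 0. -/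

import Mathlib

open Complex Finset

/-- Pochhammer symbol `(x)_k = x (x+1) ⋯ (x+k-1)`. -/
noncomputable def poch (x : ℂ) (k : ℕ) : ℂ := ∏ i ∈ Finset.range k, (x + i)

/-- Beta function `B(x,y) = Γ(x) Γ(y) / Γ(x+y)`. -/
noncomputable def cBeta (x y : ℂ) : ℂ :=
  Complex.Gamma x * Complex.Gamma y / Complex.Gamma (x + y)


lemma inv_isBigO (s : ℂ) : (fun k : ℕ => (s + k)⁻¹) =O[Filter.atTop] (fun k : ℕ => (k : ℝ)⁻¹) := by
  refine Asymptotics.IsBigO.of_bound 2 ?_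
  obtain ⟨N, hN⟩ := exists_nat_gt (2 * ‖s‖)
  filter_upwards [Filter.eventually_ge_atTop (max N 1)] with k hk
  have hk1 : (1 : ℝ) ≤ k := by exact_mod_cast le_trans (le_max_right _ _) hk
  have hk2 : (N : ℝ) ≤ k := by exact_mod_cast le_trans (le_max_left _ _) hk
  have h3 : (k : ℝ) / 2 ≤ ‖s + k‖ := by
    have := norm_sub_le (s + k) s
    rw [add_sub_cancel_left, Complex.norm_natCast] at this
    linarith
  rw [norm_inv, norm_inv, Real.norm_natCast]
  calc ‖s + k‖⁻¹ ≤ ((k : ℝ) / 2)⁻¹ := inv_anti₀ (by positivity) h3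
    _ = 2 * (k : ℝ)⁻¹ := by rw [inv_div]; rfl

lemma poch_succ (x : ℂ) (k : ℕ) : poch x (k + 1) = poch x k * (x + k) := by
  simp [poch, Finset.prod_range_succ]

lemma poch_succ' (x : ℂ) (k : ℕ) : poch x (k + 1) = x * poch (x + 1) k := by
  simp only [poch, Finset.prod_range_succ']
  rw [mul_comm]
  push_cast
  congr 1
  · ring
  · refine Finset.prod_congr rfl fun i _ => by ring

lemma poch_zero (x : ℂ) : poch x 0 = 1 := by simp [poch]

lemma poch_ne (x : ℂ) (h : ∀ k : ℕ, x ≠ -(k : ℂ)) (k : ℕ) : poch x k ≠ 0 := by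
  rw [poch, Finset.prod_ne_zero_iff]
  intro i _ h0
  exact h i (eq_neg_of_add_eq_zero_left h0)

lemma poch_add (x : ℂ) (j k : ℕ) : poch x (j + k) = poch x j * poch (x + j) k := by
  simp only [poch, Finset.prod_range_add]
  congr 1
  refine Finset.prod_congr rfl fun i _ => by push_cast; ring

/-- partial fractions for the reciprocal of a Pochhammer symbol -/
lemma pfrac (m : ℕ) : ∀ x : ℂ, (∀ k : ℕ, x ≠ -(k : ℂ)) →
    1 / poch x (m + 1) = ∑ j ∈ range (m + 1),
      poch (-(m : ℂ)) j / ((Nat.factorial m : ℂ) * (Nat.factorial j : ℂ)) * (1 / (x + j)) := by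
  induction m with
  | zero => intro x _; simp [poch]
  | succ m ih =>
    intro x hx
    have hx1 : ∀ k : ℕ, x + 1 ≠ -(k : ℂ) := by
      intro k h
      apply hx (k + 1)
      push_cast
      linear_combination h
    have hm : ((m : ℂ) + 1) ≠ 0 := by exact_mod_cast Nat.succ_ne_zero m
    have hx0 : x ≠ 0 := by simpa using hx 0
    have hxm : x + ((m : ℂ) + 1) ≠ 0 := by
      intro h; apply hx (m + 1); push_cast; linear_combination h
    have key : 1 / poch x (m + 1 + 1)
        = (1 / poch x (m + 1) - 1 / poch (x + 1) (m + 1)) / ((m : ℂ) + 1) := by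
      have e1 := poch_succ x (m + 1)
      have e2 := poch_succ' x (m + 1)
      have n1 := poch_ne x hx (m + 1)
      have n2 := poch_ne (x + 1) hx1 (m + 1)
      have n3 := poch_ne x hx (m + 1 + 1)
      push_cast at e1
      have f1 : 1 / poch x (m + 1) = (x + (m + 1)) / poch x (m + 1 + 1) := by
        rw [e1]; field_simp
      have f2 : 1 / poch (x + 1) (m + 1) = x / poch x (m + 1 + 1) := by
        rw [e2]; field_simp
      rw [f1, f2]; field_simp; ring
    rw [key, ih x hx, ih (x + 1) hx1]
    have z : poch (-(m : ℂ)) (m + 1) = 0 := by simp [poch_succ]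
    have s1 : ∑ j ∈ range (m + 1),
      poch (-(m : ℂ)) j / ((Nat.factorial m : ℂ) * (Nat.factorial j : ℂ)) * (1 / (x + j))
      = ∑ j ∈ range (m + 1 + 1),
      poch (-(m : ℂ)) j / ((Nat.factorial m : ℂ) * (Nat.factorial j : ℂ)) * (1 / (x + j)) := by
      rw [Finset.sum_range_succ _ (m + 1), z]; simp
    rw [s1, Finset.sum_range_succ', Finset.sum_range_succ' _ (m + 1), add_sub_right_comm,
      ← Finset.sum_sub_distrib, add_div, Finset.sum_div]
    congr 1
    · refine Finset.sum_congr rfl fun j _ => ?_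
      have hj : ((j : ℂ) + 1) ≠ 0 := by exact_mod_cast Nat.succ_ne_zero j
      have hfm : (Nat.factorial m : ℂ) ≠ 0 := by exact_mod_cast Nat.factorial_ne_zero m
      have hfj : (Nat.factorial j : ℂ) ≠ 0 := by exact_mod_cast Nat.factorial_ne_zero j
      have hxj : x + ((j : ℂ) + 1) ≠ 0 := by
        intro h; apply hx (j + 1); push_cast; linear_combination h
      rw [poch_succ, poch_succ' (-((m + 1 : ℕ) : ℂ))]
      have : -((m + 1 : ℕ) : ℂ) + 1 = -(m : ℂ) := by push_cast; ring
      rw [this, Nat.factorial_succ, Nat.factorial_succ]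
      push_cast
      rw [show x + 1 + (j : ℂ) = x + (j + 1) by ring]
      field_simp
      ring
    · simp [poch_zero, Nat.factorial_succ]
      field_simp

lemma coeff_isBigO (a : ℂ) : (fun k : ℕ => poch a k / (Nat.factorial k : ℂ)) =O[Filter.atTop]
    (fun k : ℕ => (k : ℝ) ^ (a.re - 1)) := by
  by_cases h : ∀ k : ℕ, a ≠ -(k : ℂ)
  · have t1 := (Complex.GammaSeq_tendsto_Gamma a).inv₀ (Complex.Gamma_ne_zero h)
    have b1 := t1.isBigO_one ℝ
    have b2 : (fun k : ℕ => (k : ℂ) ^ a) =O[Filter.atTop] (fun k : ℕ => (k : ℝ) ^ a.re) := by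
      refine Asymptotics.IsBigO.of_bound 1 ?_
      filter_upwards [Filter.eventually_gt_atTop 0] with k hk
      rw [Complex.norm_natCast_cpow_of_pos hk, one_mul]
      exact le_abs_self _
    have b3 : (fun k : ℕ => (a + k)⁻¹) =O[Filter.atTop] (fun k : ℕ => (k : ℝ)⁻¹) := inv_isBigO a
    refine ((b1.mul b2).mul b3).congr' ?_ ?_
    · filter_upwards [Filter.eventually_gt_atTop 0] with k hk
      have hak : a + k ≠ 0 := fun h0 => h k (eq_neg_of_add_eq_zero_left h0)
      have hp := poch_ne a h k
      have hfk : (Nat.factorial k : ℂ) ≠ 0 := by exact_mod_cast Nat.factorial_ne_zero k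
      have hka : (k : ℂ) ^ a ≠ 0 := by
        rw [Complex.cpow_ne_zero_iff]; left; exact_mod_cast hk.ne'
      have : Complex.GammaSeq a k = (k : ℂ) ^ a * (Nat.factorial k : ℂ) / (poch a k * (a + k)) := by
        rw [← poch_succ]; rfl
      rw [this]
      field_simp
    · filter_upwards [Filter.eventually_gt_atTop 0] with k hk
      have : (0 : ℝ) < k := by exact_mod_cast hk
      rw [Real.rpow_sub this, Real.rpow_one]
      simp [div_eq_mul_inv]
  · push Not at h
    obtain ⟨p, rfl⟩ := h
    refine (Asymptotics.isBigO_zero _ _).congr' ?_ (Filter.EventuallyEq.refl _ _)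
    filter_upwards [Filter.eventually_gt_atTop p] with k hk
    have : poch (-(p : ℂ)) k = 0 := by
      rw [poch, Finset.prod_eq_zero_iff]
      exact ⟨p, by simpa using hk, by simp⟩
    simp [this]

lemma summable_coeff {a : ℂ} (ha : a.re < 1) (s : ℂ) :
    Summable (fun k : ℕ => ‖poch a k / (Nat.factorial k : ℂ) * (s + k)⁻¹‖) := by
  have h := ((coeff_isBigO a).mul (inv_isBigO s)).norm_left
  have hs : Summable (fun k : ℕ => (k : ℝ) ^ (a.re - 2)) :=
    Real.summable_nat_rpow.2 (by linarith)
  refine summable_of_isBigO_nat hs (h.congr' (Filter.EventuallyEq.refl _ _) ?_)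
  filter_upwards [Filter.eventually_gt_atTop 0] with k hk
  have : (0 : ℝ) < k := by exact_mod_cast hk
  rw [show a.re - 2 = a.re - 1 - 1 by ring, Real.rpow_sub_one this.ne' (a.re - 1), div_eq_mul_inv]

lemma coeff_eq_choose (a : ℂ) (k : ℕ) :
    Ring.choose (a + k - 1) k = poch a k / (Nat.factorial k : ℂ) := by
  have hfk : (Nat.factorial k : ℂ) ≠ 0 := by exact_mod_cast Nat.factorial_ne_zero k
  rw [← Ring.multichoose_eq, eq_div_iff hfk, mul_comm, ← nsmul_eq_mul,
    Ring.factorial_nsmul_multichoose_eq_ascPochhammer]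
  rw [Polynomial.ascPochhammer_smeval_eq_eval]
  clear hfk
  induction k with
  | zero => simp [poch_zero]
  | succ k ih => rw [ascPochhammer_succ_eval, ih, poch_succ]

lemma binom_hasSum (a : ℂ) {t : ℝ} (h0 : 0 < t) (h1 : t < 1) :
    HasSum (fun k : ℕ => poch a k / (Nat.factorial k : ℂ) * (t : ℂ) ^ k)
      ((1 - (t : ℂ)) ^ (-a)) := by
  have h := (Complex.one_div_one_sub_cpow_hasFPowerSeriesOnBall_zero a).hasSum (y := (t : ℂ))
    (by
      rw [← ENNReal.ofReal_one, Metric.eball_ofReal]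
      simpa [abs_of_pos h0] using h1)
  simp only [zero_add, one_div] at h
  rw [Complex.cpow_neg]
  convert! h using 1
  ext k
  simp [coeff_eq_choose, mul_comm]

open MeasureTheory in
lemma base_pos {a s : ℂ} (ha : a.re < 1) (hs : 0 < s.re) :
    HasSum (fun k : ℕ => poch a k / (Nat.factorial k : ℂ) * (s + k)⁻¹) (cBeta (1 - a) s) := by
  have ha' : 0 < (1 - a).re := by simpa using ha
  have hB : cBeta (1 - a) s = Complex.betaIntegral s (1 - a) := by
    have h := Complex.Gamma_mul_Gamma_eq_betaIntegral hs ha'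
    have hne : Complex.Gamma (s + (1 - a)) ≠ 0 :=
      Complex.Gamma_ne_zero_of_re_pos (by rw [Complex.add_re]; linarith)
    rw [cBeta, add_comm (1 - a) s, mul_comm, h]
    field_simp
  have hre : ∀ k : ℕ, 0 < (s + k).re := fun k => by
    rw [Complex.add_re, Complex.natCast_re]; positivity
  have hint : ∀ k : ℕ, IntegrableOn (fun t : ℝ => (t : ℂ) ^ (s + k - 1)) (Set.Ioc 0 1) := by
    intro k
    rw [← intervalIntegrable_iff_integrableOn_Ioc_of_le zero_le_one]
    refine intervalIntegral.intervalIntegrable_cpow' ?_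
    have := hre k
    rw [Complex.sub_re, Complex.one_re]; linarith
  have hnorm : ∀ k : ℕ, ∫ t in Set.Ioc (0 : ℝ) 1, ‖(t : ℂ) ^ (s + k - 1)‖ = (s.re + k)⁻¹ := by
    intro k
    have := hre k
    have e : ∫ t in Set.Ioc (0 : ℝ) 1, ‖(t : ℂ) ^ (s + k - 1)‖
        = ∫ t in Set.Ioc (0 : ℝ) 1, t ^ (s.re + k - 1) := by
      refine setIntegral_congr_fun measurableSet_Ioc fun t ht => ?_
      rw [Complex.norm_cpow_eq_rpow_re_of_pos ht.1]
      simp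
    rw [e, ← intervalIntegral.integral_of_le zero_le_one, integral_rpow]
    · simp only [Complex.add_re, Complex.natCast_re] at this
      rw [sub_add_cancel, Real.one_rpow, Real.zero_rpow this.ne']; simp
    · left
      simp only [Complex.add_re, Complex.natCast_re] at this
      linarith
  have hval : ∀ k : ℕ, ∫ t in Set.Ioc (0 : ℝ) 1, (t : ℂ) ^ (s + k - 1) = (s + k)⁻¹ := by
    intro k
    have h := Complex.betaIntegral_eval_one_right (hre k)
    rw [Complex.betaIntegral, intervalIntegral.integral_of_le zero_le_one] at h
    simpa using h
  have main := hasSum_integral_of_summable_integral_norm (μ := volume.restrict (Set.Ioc (0 : ℝ) 1))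
    (F := fun (k : ℕ) (t : ℝ) => poch a k / (Nat.factorial k : ℂ) * (t : ℂ) ^ (s + k - 1))
    (fun k => (hint k).const_mul _) (by
      simp only [norm_mul, integral_const_mul, hnorm]
      refine (summable_coeff ha (s.re : ℂ)).congr fun k => ?_
      rw [norm_mul]
      congr 1
      rw [norm_inv, ← Complex.ofReal_natCast, ← Complex.ofReal_add, Complex.norm_real,
        Real.norm_of_nonneg (by positivity)])
  simp only [integral_const_mul, hval] at main
  rw [hB, Complex.betaIntegral, intervalIntegral.integral_of_le zero_le_one]
  convert! main using 1
  refine setIntegral_congr_ae measurableSet_Ioc ?_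
  have : ∀ᵐ t : ℝ, t ≠ 1 := by simp [ae_iff]
  filter_upwards [this] with t ht1 ht
  have hb := binom_hasSum a ht.1 (lt_of_le_of_ne ht.2 ht1)
  have ht0 : (t : ℂ) ≠ 0 := by exact_mod_cast ht.1.ne'
  have := (hb.mul_left ((t : ℂ) ^ (s - 1))).tsum_eq
  rw [show 1 - a - 1 = -a by ring, ← this]
  refine tsum_congr fun k => ?_
  rw [show s + (k : ℂ) - 1 = (s - 1) + k by ring, Complex.cpow_add _ _ ht0, Complex.cpow_natCast]
  ring

lemma cBeta_succ {a s : ℂ} (hs : s ≠ 0) :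
    s * cBeta (1 - a) s = (s + 1 - a) * cBeta (1 - a) (s + 1) := by
  rw [cBeta, cBeta, Complex.Gamma_add_one s hs]
  by_cases h : 1 - a + s = 0
  · rw [h, Complex.Gamma_zero, show s + 1 - a = 1 - a + s by ring, h]; simp
  · rw [← add_assoc, Complex.Gamma_add_one _ h, show s + 1 - a = 1 - a + s by ring]
    by_cases hg : Complex.Gamma (1 - a + s) = 0
    · simp [hg]
    · field_simp

lemma tele_tendsto {a : ℂ} (ha : a.re < 1) (s : ℂ) :
    Filter.Tendsto (fun k : ℕ => poch a k / (Nat.factorial k : ℂ) * (s + k)⁻¹ * k)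
      Filter.atTop (nhds 0) := by
  have h3 : (fun k : ℕ => (k : ℂ)) =O[Filter.atTop] (fun k : ℕ => (k : ℝ)) :=
    Asymptotics.IsBigO.of_bound 1 (Filter.Eventually.of_forall fun k => by simp)
  have h := (((coeff_isBigO a).mul (inv_isBigO s)).mul h3)
  refine h.trans_tendsto ?_
  have h4 : Filter.Tendsto (fun k : ℕ => (k : ℝ) ^ (-(1 - a.re))) Filter.atTop (nhds 0) :=
    (tendsto_rpow_neg_atTop (by linarith)).comp tendsto_natCast_atTop_atTop
  refine h4.congr' ?_
  filter_upwards [Filter.eventually_gt_atTop 0] with k hk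
  have : (0 : ℝ) < k := by exact_mod_cast hk
  rw [show -(1 - a.re) = a.re - 1 by ring]
  field_simp

lemma base_all {a : ℂ} (ha : a.re < 1) (N : ℕ) : ∀ s : ℂ, (∀ k : ℕ, s ≠ -(k : ℂ)) →
    -(N : ℝ) < s.re →
    HasSum (fun k : ℕ => poch a k / (Nat.factorial k : ℂ) * (s + k)⁻¹) (cBeta (1 - a) s) := by
  induction N with
  | zero => intro s _ h; exact base_pos ha (by simpa using h)
  | succ N ih =>
    intro s hs hN
    have hs1 : ∀ k : ℕ, s + 1 ≠ -(k : ℂ) := by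
      intro k h
      apply hs (k + 1)
      push_cast
      linear_combination h
    have hs0 : s ≠ 0 := by simpa using hs 0
    have h1 := ih (s + 1) hs1 (by
      push_cast at hN
      rw [Complex.add_re, Complex.one_re]; linarith)
    have hsum : Summable (fun k : ℕ => poch a k / (Nat.factorial k : ℂ) * (s + k)⁻¹) :=
      (summable_coeff ha s).of_norm
    have hid : ∀ k : ℕ, s * (poch a k / (Nat.factorial k : ℂ) * (s + k)⁻¹)
        - (s + 1 - a) * (poch a k / (Nat.factorial k : ℂ) * (s + 1 + k)⁻¹)
        = poch a (k + 1) / (Nat.factorial (k + 1) : ℂ) * (s + (k + 1 : ℕ))⁻¹ * (k + 1 : ℕ)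
          - poch a k / (Nat.factorial k : ℂ) * (s + k)⁻¹ * k := by
      intro k
      have hfk : (Nat.factorial k : ℂ) ≠ 0 := by exact_mod_cast Nat.factorial_ne_zero k
      have hk1 : ((k : ℂ) + 1) ≠ 0 := by exact_mod_cast Nat.succ_ne_zero k
      have n1 : s + k ≠ 0 := fun h0 => hs k (eq_neg_of_add_eq_zero_left h0)
      have n2 : s + (k + 1) ≠ 0 := by
        intro h; apply hs (k + 1); push_cast; linear_combination h
      rw [poch_succ, Nat.factorial_succ]
      push_cast
      rw [show s + 1 + (k : ℂ) = s + (k + 1) by ring]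
      field_simp
      ring
    have hd : HasSum (fun k : ℕ => s * (poch a k / (Nat.factorial k : ℂ) * (s + k)⁻¹)
        - (s + 1 - a) * (poch a k / (Nat.factorial k : ℂ) * (s + 1 + k)⁻¹)) 0 := by
      have hS := (hsum.mul_left s).sub (h1.summable.mul_left (s + 1 - a))
      rw [hS.hasSum_iff_tendsto_nat]
      refine (tele_tendsto ha s).congr fun n => ?_
      rw [Finset.sum_congr rfl fun k _ => hid k,
        Finset.sum_range_sub (fun k : ℕ => poch a k / (Nat.factorial k : ℂ) * (s + k)⁻¹ * k)]
      simp
    have h2 := (hd.add (h1.mul_left (s + 1 - a))).mul_left s⁻¹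
    convert! h2 using 1
    · ext k
      rw [sub_add_cancel, inv_mul_cancel_left₀ hs0]
    · rw [zero_add, ← cBeta_succ hs0]
      field_simp

lemma base {a : ℂ} (ha : a.re < 1) (s : ℂ) (hs : ∀ k : ℕ, s ≠ -(k : ℂ)) :
    HasSum (fun k : ℕ => poch a k / (Nat.factorial k : ℂ) * (s + k)⁻¹) (cBeta (1 - a) s) := by
  obtain ⟨N, hN⟩ := exists_nat_gt (-s.re)
  exact base_all ha N s hs (by linarith)

lemma cBeta_left {a s : ℂ} (ha : 1 - a ≠ 0) (hs : 1 - a + s ≠ 0) :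
    (a - 1 - s) * cBeta (1 - (a - 1)) s = (a - 1) * cBeta (1 - a) s := by
  rw [cBeta, cBeta, show 1 - (a - 1) = (1 - a) + 1 by ring, Complex.Gamma_add_one _ ha,
    show 1 - a + 1 + s = (1 - a + s) + 1 by ring, Complex.Gamma_add_one _ hs]
  by_cases hg : Complex.Gamma (1 - a + s) = 0
  · simp [hg]
  · field_simp
    ring

lemma diff_hasSum {a : ℂ} (ha : a.re < 2) (h1 : 1 - a ≠ 0) (s t : ℂ)
    (hs : ∀ k : ℕ, s ≠ -(k : ℂ)) (ht : ∀ k : ℕ, t ≠ -(k : ℂ))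
    (hs1 : 1 - a + s ≠ 0) (ht1 : 1 - a + t ≠ 0) :
    HasSum (fun k : ℕ => poch a k / (Nat.factorial k : ℂ) * (1 / (s + k) - 1 / (t + k)))
      (cBeta (1 - a) s - cBeta (1 - a) t) := by
  have ha' : (a - 1).re < 1 := by rw [Complex.sub_re, Complex.one_re]; linarith
  have h0 : a - 1 ≠ 0 := by intro h; apply h1; linear_combination -h
  have hS := ((((base ha' s hs).mul_left (a - 1 - s)).sub
    ((base ha' t ht).mul_left (a - 1 - t)))).mul_left (a - 1)⁻¹
  rw [cBeta_left h1 hs1, cBeta_left h1 ht1, ← mul_sub, inv_mul_cancel_left₀ h0] at hS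
  convert! hS using 1
  ext k
  have e1 := poch_succ (a - 1) k
  have e2 := poch_succ' (a - 1) k
  rw [sub_add_cancel] at e2
  have e : poch a k = (a - 1)⁻¹ * (poch (a - 1) k * (a - 1 + k)) := by
    rw [← e1, e2, inv_mul_cancel_left₀ h0]
  have hfk : (Nat.factorial k : ℂ) ≠ 0 := by exact_mod_cast Nat.factorial_ne_zero k
  have n1 : s + k ≠ 0 := fun h0 => hs k (eq_neg_of_add_eq_zero_left h0)
  have n2 : t + k ≠ 0 := fun h0 => ht k (eq_neg_of_add_eq_zero_left h0)
  rw [e]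
  field_simp
  ring

lemma ne_shift {s : ℂ} (hs : ∀ k : ℕ, s ≠ -(k : ℂ)) (j : ℕ) : ∀ k : ℕ, s + j ≠ -(k : ℂ) := by
  intro k h
  apply hs (k + j)
  push_cast
  linear_combination h

lemma cBeta_add {a s : ℂ} (hs : ∀ k : ℕ, s ≠ -(k : ℂ)) (hs1 : ∀ k : ℕ, 1 + s - a ≠ -(k : ℂ))
    (j : ℕ) : cBeta (1 - a) (s + j) = cBeta (1 - a) s * (poch s j / poch (1 + s - a) j) := by
  induction j with
  | zero => simp [poch_zero]
  | succ j ih =>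
    have n0 : s + j ≠ 0 := by simpa using ne_shift hs j 0
    have n1 : 1 + s - a + j ≠ 0 := by simpa using ne_shift hs1 j 0
    have n2 := poch_ne _ hs1 j
    have h := cBeta_succ (a := a) n0
    rw [ih] at h
    rw [poch_succ, poch_succ]
    push_cast
    rw [← add_assoc]
    rw [show s + j + 1 - a = 1 + s - a + j by ring] at h
    field_simp
    field_simp at h
    linear_combination -h

lemma poch_shift (x : ℂ) (n j : ℕ) :
    poch (x - j) (n + 1) * poch (-x - n) j = poch x (n + 1) * poch (1 - x) j := by
  induction j with
  | zero => simp [poch_zero]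
  | succ j ih =>
    have e1 := poch_succ (x - (j + 1)) (n + 1)
    have e2 := poch_succ' (x - (j + 1)) (n + 1)
    rw [show x - ((j : ℂ) + 1) + 1 = x - j by ring] at e2
    rw [e2] at e1
    rw [poch_succ (-x - n) j, poch_succ (1 - x) j]
    push_cast at e1 ⊢
    linear_combination (1 - x + j) * ih + poch (-x - n) j * e1

lemma half (m n : ℕ) (a b c : ℂ) (hb : ∀ k : ℕ, b ≠ -(k : ℂ))
    (hcb : ∀ k : ℤ, c - b ≠ k) (h2 : ∀ k : ℕ, 1 + b - a ≠ -(k : ℂ)) :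
    cBeta (1 - a) b / (poch (c - b) (n + 1) * (Nat.factorial m : ℂ)) *
          ∑ k ∈ Finset.range (m + 1),
            poch (-(m : ℂ)) k * poch b k * poch (b - c - n) k /
              (poch (1 + b - a) k * poch (1 + b - c) k * (Nat.factorial k : ℂ))
    = ∑ j ∈ range (m + 1), ∑ i ∈ range (n + 1),
      poch (-(m : ℂ)) j / ((Nat.factorial m : ℂ) * (Nat.factorial j : ℂ)) *
      (poch (-(n : ℂ)) i / ((Nat.factorial n : ℂ) * (Nat.factorial i : ℂ))) *
      (1 / (c - b - j + i)) * cBeta (1 - a) (b + j) := by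
  rw [Finset.mul_sum]
  refine Finset.sum_congr rfl fun j _ => ?_
  have hx : ∀ k : ℕ, c - b - j ≠ -(k : ℂ) := by
    intro k h
    apply hcb (j - k)
    push_cast
    linear_combination h
  have hx0 : ∀ k : ℕ, c - b ≠ -(k : ℂ) := by
    intro k h
    apply hcb (-k)
    push_cast
    exact h
  have hx1 : ∀ k : ℕ, 1 + b - c ≠ -(k : ℂ) := by
    intro k h
    apply hcb (k + 1)
    push_cast
    linear_combination -h
  have hp := pfrac n (c - b - j) hx
  have hs := poch_shift (c - b) n j
  rw [show -(c - b) - (n : ℂ) = b - c - n by ring, show 1 - (c - b) = 1 + b - c by ring] at hs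
  have n1 := poch_ne _ hx (n + 1)
  have n2 := poch_ne _ hx0 (n + 1)
  have n3 := poch_ne _ hx1 j
  have n4 := poch_ne _ h2 j
  have hfm : (Nat.factorial m : ℂ) ≠ 0 := by exact_mod_cast Nat.factorial_ne_zero m
  have hfj : (Nat.factorial j : ℂ) ≠ 0 := by exact_mod_cast Nat.factorial_ne_zero j
  have hr : ∑ i ∈ range (n + 1),
      poch (-(m : ℂ)) j / ((Nat.factorial m : ℂ) * (Nat.factorial j : ℂ)) *
      (poch (-(n : ℂ)) i / ((Nat.factorial n : ℂ) * (Nat.factorial i : ℂ))) *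
      (1 / (c - b - j + i)) * cBeta (1 - a) (b + j)
      = poch (-(m : ℂ)) j / ((Nat.factorial m : ℂ) * (Nat.factorial j : ℂ)) *
        (1 / poch (c - b - j) (n + 1)) * cBeta (1 - a) (b + j) := by
    rw [hp, Finset.mul_sum, Finset.sum_mul]
    refine Finset.sum_congr rfl fun i _ => by ring
  have hq : poch (b - c - n) j / (poch (c - b) (n + 1) * poch (1 + b - c) j)
      = 1 / poch (c - b - j) (n + 1) := by
    rw [div_eq_div_iff (mul_ne_zero n2 n3) n1]
    linear_combination hs
  rw [hr, cBeta_add hb h2, ← hq]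
  field_simp

lemma term_eq (m n : ℕ) (a b c : ℂ)
    (hb : ∀ k : ℕ, b ≠ -(k : ℂ)) (hc : ∀ k : ℕ, c ≠ -(k : ℂ))
    (hcb : ∀ k : ℤ, c - b ≠ k) (k : ℕ) :
    poch a k * poch b k * poch c k /
          (poch (b + 1 + m) k * poch (c + 1 + n) k * (Nat.factorial k : ℂ))
    = poch b (m + 1) * poch c (n + 1) * ∑ j ∈ range (m + 1), ∑ i ∈ range (n + 1),
      poch (-(m : ℂ)) j / ((Nat.factorial m : ℂ) * (Nat.factorial j : ℂ)) *
      (poch (-(n : ℂ)) i / ((Nat.factorial n : ℂ) * (Nat.factorial i : ℂ))) *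
      (1 / (c - b - j + i)) *
      (poch a k / (Nat.factorial k : ℂ) * (1 / (b + j + k) - 1 / (c + i + k))) := by
  have aux : ∀ (x : ℂ) (p : ℕ), (∀ k : ℕ, x ≠ -(k : ℂ)) →
      poch x k / poch (x + 1 + p) k = poch x (p + 1) * (1 / poch (x + k) (p + 1)) := by
    intro x p hx
    have e1 := poch_add x k (p + 1)
    have e2 := poch_add x (p + 1) k
    rw [add_comm (p + 1) k, e1] at e2
    push_cast at e2
    rw [show x + ((p : ℂ) + 1) = x + 1 + p by ring] at e2
    have n1 := poch_ne _ (ne_shift hx k) (p + 1)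
    have n2 : poch (x + 1 + p) k ≠ 0 := by
      have := poch_ne _ (ne_shift hx (p + 1)) k
      push_cast at this
      rwa [show x + ((p : ℂ) + 1) = x + 1 + p by ring] at this
    rw [mul_one_div, div_eq_div_iff n2 n1]
    exact e2
  have hL : poch a k * poch b k * poch c k /
          (poch (b + 1 + m) k * poch (c + 1 + n) k * (Nat.factorial k : ℂ))
      = poch a k / (Nat.factorial k : ℂ) * (poch b k / poch (b + 1 + m) k) *
        (poch c k / poch (c + 1 + n) k) := by
    rw [div_mul_div_comm, div_mul_div_comm]
    congr 1
    ring
  rw [hL, aux b m hb, aux c n hc, pfrac m _ (ne_shift hb k), pfrac n _ (ne_shift hc k)]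
  have hS : ∀ A B C D E : ℂ, A * (B * C) * (D * E) = B * D * (A * (C * E)) := by
    intros; ring
  rw [hS, Finset.sum_mul_sum, Finset.mul_sum]
  congr 1
  refine Finset.sum_congr rfl fun j _ => ?_
  rw [Finset.mul_sum]
  refine Finset.sum_congr rfl fun i _ => ?_
  have n1 : c - b - j + i ≠ 0 := by
    intro h
    apply hcb (j - i)
    push_cast
    linear_combination h
  have n2 : b + j + k ≠ 0 := by
    simpa using ne_shift (ne_shift hb j) k 0
  have n3 : c + i + k ≠ 0 := by
    simpa using ne_shift (ne_shift hc i) k 0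
  have hpf : 1 / (b + k + j) * (1 / (c + k + i))
      = 1 / (c - b - j + i) * (1 / (b + j + k) - 1 / (c + i + k)) := by
    rw [add_right_comm b, add_right_comm c]
    field_simp
    ring
  linear_combination (poch a k / (Nat.factorial k : ℂ)) *
    (poch (-(m : ℂ)) j / ((Nat.factorial m : ℂ) * (Nat.factorial j : ℂ))) *
      (poch (-(n : ℂ)) i / ((Nat.factorial n : ℂ) * (Nat.factorial i : ℂ))) * hpf

theorem main_summation_ZY (m n : ℕ) (a b c : ℂ) (ha : a.re < 2)
    (hb : ∀ k : ℕ, b ≠ -(k : ℂ)) (hc : ∀ k : ℕ, c ≠ -(k : ℂ))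
    (hcb : ∀ k : ℤ, c - b ≠ k)
    (h1 : ∀ k : ℕ, 1 - a ≠ -(k : ℂ)) (h2 : ∀ k : ℕ, 1 + b - a ≠ -(k : ℂ))
    (h3 : ∀ k : ℕ, 1 + c - a ≠ -(k : ℂ)) :
    HasSum (fun k : ℕ =>
        poch a k * poch b k * poch c k /
          (poch (b + 1 + m) k * poch (c + 1 + n) k * (Nat.factorial k : ℂ)))
      (poch b (m + 1) * poch c (n + 1) *
        (cBeta (1 - a) b / (poch (c - b) (n + 1) * (Nat.factorial m : ℂ)) *
          ∑ k ∈ Finset.range (m + 1),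
            poch (-(m : ℂ)) k * poch b k * poch (b - c - n) k /
              (poch (1 + b - a) k * poch (1 + b - c) k * (Nat.factorial k : ℂ))
        + cBeta (1 - a) c / (poch (b - c) (m + 1) * (Nat.factorial n : ℂ)) *
          ∑ k ∈ Finset.range (n + 1),
            poch (-(n : ℂ)) k * poch c k * poch (c - b - m) k /
              (poch (1 + c - a) k * poch (1 + c - b) k * (Nat.factorial k : ℂ)))) := by
  have h10 : 1 - a ≠ 0 := by simpa using h1 0
  rw [half m n a b c hb hcb h2, half n m a c b hc (fun k h => hcb (-k) (by
    push_cast; linear_combination -h)) h3, Finset.sum_comm (s := range (n + 1)),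
    ← Finset.sum_add_distrib]
  simp only [← Finset.sum_add_distrib]
  simp only [term_eq m n a b c hb hc hcb]
  refine HasSum.mul_left _ (hasSum_sum fun j _ => hasSum_sum fun i _ => ?_)
  have hd := diff_hasSum ha h10 (b + j) (c + i) (ne_shift hb j) (ne_shift hc i)
    (by
      intro h
      apply h2 j
      linear_combination h)
    (by
      intro h
      apply h3 i
      linear_combination h)
  convert! hd.mul_left _ using 1
  have n1 : c - b - j + i ≠ 0 := by
    intro h
    apply hcb (j - i)
    push_cast
    linear_combination h
  have e : 1 / (b - c - i + j) = -(1 / (c - b - j + i)) := by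
    rw [show b - c - i + j = -(c - b - j + i) by ring, one_div_neg_eq_neg_one_div]
  rw [e]
  ring
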